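/- Fix finite nonempty sets A₀, A₁ ⊂ ℕ with n' := max A₀ ≥ 1, m' := max A₁ ≥ 1, gcd of the nonzero elements of A₀ ∪ A₁ equal to 1, and such that 0 ∈ A₀ or 0 ∈ A₁ (at least one of P₀, P₁ has a constant term). Then for generic coefficients, the Newton polygon N(φ) of every irreducible φ ∈ ℂ[x,y] with φ(P₀(t), P₁(t)) = 0 in ℂ[t] equals the triangle with vertices (0,0), (m', 0), (0, n'). -/

import Mathlib

open Polynomial

/-- The univariate polynomial with support `S` and coefficient vector `c`. -/
noncomputable def polyOfCoeffs (S : Finset ℕ) (c : {s // s ∈ S} → ℂ) : Polynomial ℂ :=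
  ∑ s ∈ S.attach, Polynomial.C (c s) * Polynomial.X ^ (s : ℕ)

/-- The Newton polygon of a bivariate polynomial: the convex hull in `ℝ²` of its support. -/
noncomputable def newtonPolygon (φ : MvPolynomial (Fin 2) ℂ) : Set (ℝ × ℝ) :=
  convexHull ℝ ((fun d : Fin 2 →₀ ℕ => ((d 0 : ℝ), (d 1 : ℝ))) '' ↑φ.support)

/-- `φ(P₀(t), P₁(t)) = 0` in `ℂ[t]`, where `P₀, P₁` have supports `A 0, A 1`
and coefficient vector `c`. -/
def vanishesPoly (A : Fin 2 → Finset ℕ)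
    (c : (Σ i : Fin 2, {s // s ∈ A i}) → ℂ) (φ : MvPolynomial (Fin 2) ℂ) : Prop :=
  MvPolynomial.aeval
    ![polyOfCoeffs (A 0) (fun s => c ⟨0, s⟩),
      polyOfCoeffs (A 1) (fun s => c ⟨1, s⟩)] φ = 0


/-- A weighted Leibniz bound for the degree of a determinant of polynomials. -/
lemma natDegree_det_le_weights {R : Type*} [CommRing R] {ι : Type*} [Fintype ι] [DecidableEq ι]
    (M : Matrix ι ι R[X]) (r c : ι → ℕ)
    (h : ∀ i j, M i j ≠ 0 → (M i j).natDegree + r i ≤ c j) :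
    M.det.natDegree ≤ ∑ j, c j - ∑ i, r i := by
  rw [Matrix.det_apply]
  refine Polynomial.natDegree_sum_le_of_forall_le _ _ ?_
  intro σ _
  refine (Polynomial.natDegree_smul_le _ _).trans ?_
  by_cases h0 : ∃ i, M (σ i) i = 0
  · obtain ⟨i, hi⟩ := h0
    have h1 : ∏ i, M (σ i) i = 0 := Finset.prod_eq_zero (Finset.mem_univ i) hi
    refine (congrArg Polynomial.natDegree h1).trans_le ?_
    simp
  · push Not at h0
    refine (Polynomial.natDegree_prod_le _ _).trans ?_
    apply Nat.le_sub_of_add_le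
    rw [← Equiv.sum_comp σ r, ← Finset.sum_add_distrib]
    exact Finset.sum_le_sum fun i _ => h _ _ (h0 i)

/-- The grading homomorphism `x ↦ x u^n`, `y ↦ y u^m`. -/
noncomputable def gradHom (n m : ℕ) :
    MvPolynomial (Fin 2) ℂ →ₐ[ℂ] (MvPolynomial (Fin 2) ℂ)[X] :=
  MvPolynomial.aeval ![Polynomial.C (MvPolynomial.X 0) * Polynomial.X ^ n,
    Polynomial.C (MvPolynomial.X 1) * Polynomial.X ^ m]

lemma gradHom_monomial (n m : ℕ) (d : Fin 2 →₀ ℕ) (a : ℂ) :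
    gradHom n m (MvPolynomial.monomial d a) =
      Polynomial.C (MvPolynomial.monomial d a) * Polynomial.X ^ (n * d 0 + m * d 1) := by
  rw [gradHom, MvPolynomial.aeval_monomial, MvPolynomial.monomial_eq]
  rw [Finsupp.prod_fintype _ _ (by simp), Finsupp.prod_fintype _ _ (by simp)]
  simp only [Fin.prod_univ_two, Matrix.cons_val_zero, Matrix.cons_val_one, map_mul, map_pow]
  have : algebraMap ℂ (MvPolynomial (Fin 2) ℂ)[X] a = Polynomial.C (MvPolynomial.C a) := rfl
  rw [this]
  ring

lemma gradHom_coeff (n m : ℕ) (f : MvPolynomial (Fin 2) ℂ) (d : Fin 2 →₀ ℕ) :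
    MvPolynomial.coeff d ((gradHom n m f).coeff (n * d 0 + m * d 1)) =
      MvPolynomial.coeff d f := by
  induction f using MvPolynomial.induction_on' with
  | monomial e a =>
    rw [gradHom_monomial, Polynomial.coeff_C_mul_X_pow]
    by_cases h : e = d
    · subst h; simp
    · split_ifs <;> simp [MvPolynomial.coeff_monomial, h]
  | add p q hp hq => simp [hp, hq]

lemma weight_le_of_mem_support (n m : ℕ) (f : MvPolynomial (Fin 2) ℂ) (d : Fin 2 →₀ ℕ)
    (hd : d ∈ f.support) : n * d 0 + m * d 1 ≤ (gradHom n m f).natDegree := by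
  apply Polynomial.le_natDegree_of_ne_zero
  intro h
  have := gradHom_coeff n m f d
  rw [h] at this
  simp at this
  exact (MvPolynomial.mem_support_iff.1 hd) this.symm

lemma gradHom_ne_zero (n m : ℕ) (f : MvPolynomial (Fin 2) ℂ) (hf : f ≠ 0) :
    gradHom n m f ≠ 0 := by
  intro h
  obtain ⟨d, hd⟩ := MvPolynomial.ne_zero_iff.1 hf
  have := gradHom_coeff n m f d
  rw [h] at this
  simp at this
  exact hd this.symm

/-- The implicit resultant. -/
noncomputable def implRes (P Q : ℂ[X]) (n m : ℕ) : MvPolynomial (Fin 2) ℂ :=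
  Polynomial.resultant (P.map MvPolynomial.C - Polynomial.C (MvPolynomial.X 0))
    (Q.map MvPolynomial.C - Polynomial.C (MvPolynomial.X 1)) n m

lemma coeff_weight_aux (P : ℂ[X]) (x : MvPolynomial (Fin 2) ℂ) (n k : ℕ) (hk : k ≤ n) :
    ((P.map (algebraMap ℂ (MvPolynomial (Fin 2) ℂ)[X]) -
      Polynomial.C (Polynomial.C x * Polynomial.X ^ n)).coeff k).natDegree ≤ n - k := by
  have h1 : ∀ a : ℂ, (algebraMap ℂ (MvPolynomial (Fin 2) ℂ)[X] a).natDegree = 0 := by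
    intro a
    exact Polynomial.natDegree_C (MvPolynomial.C a)
  rw [Polynomial.coeff_sub, Polynomial.coeff_map, Polynomial.coeff_C]
  split_ifs with h
  · subst h
    refine (Polynomial.natDegree_sub_le _ _).trans ?_
    rw [h1]
    simpa using Polynomial.natDegree_C_mul_X_pow_le x n
  · simp

lemma gradHom_implRes (P Q : ℂ[X]) (n m : ℕ) :
    gradHom n m (implRes P Q n m) = Polynomial.resultant
      (P.map (algebraMap ℂ (MvPolynomial (Fin 2) ℂ)[X]) -
        Polynomial.C (Polynomial.C (MvPolynomial.X 0) * Polynomial.X ^ n))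
      (Q.map (algebraMap ℂ (MvPolynomial (Fin 2) ℂ)[X]) -
        Polynomial.C (Polynomial.C (MvPolynomial.X 1) * Polynomial.X ^ m)) n m := by
  have h := Polynomial.resultant_map_map
    (P.map MvPolynomial.C - Polynomial.C (MvPolynomial.X (R := ℂ) (0 : Fin 2)))
    (Q.map MvPolynomial.C - Polynomial.C (MvPolynomial.X (R := ℂ) (1 : Fin 2))) n m
    (gradHom n m : MvPolynomial (Fin 2) ℂ →+* (MvPolynomial (Fin 2) ℂ)[X])
  have e : (gradHom n m : MvPolynomial (Fin 2) ℂ →+* (MvPolynomial (Fin 2) ℂ)[X]).comp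
      MvPolynomial.C = algebraMap ℂ (MvPolynomial (Fin 2) ℂ)[X] :=
    (gradHom n m).comp_algebraMap
  refine h.symm.trans ?_
  rw [Polynomial.map_sub, Polynomial.map_sub, Polynomial.map_map, Polynomial.map_map, e,
    Polynomial.map_C, Polynomial.map_C]
  have e0 : (gradHom n m : MvPolynomial (Fin 2) ℂ →+* (MvPolynomial (Fin 2) ℂ)[X])
      (MvPolynomial.X 0) = Polynomial.C (MvPolynomial.X 0) * Polynomial.X ^ n :=
    MvPolynomial.aeval_X _ _
  have e1 : (gradHom n m : MvPolynomial (Fin 2) ℂ →+* (MvPolynomial (Fin 2) ℂ)[X])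
      (MvPolynomial.X 1) = Polynomial.C (MvPolynomial.X 1) * Polynomial.X ^ m :=
    MvPolynomial.aeval_X _ _
  rw [e0, e1]

lemma sum_weights_aux (n m : ℕ) :
    (∑ j : Fin (n + m), j.addCases (motive := fun _ => ℕ)
      (fun j₁ : Fin n => m + (j₁ : ℕ)) (fun j₁ : Fin m => n + (j₁ : ℕ))) -
      ∑ i : Fin (n + m), (i : ℕ) = n * m := by
  rw [Fin.sum_univ_add, Fin.sum_univ_add]
  simp [Finset.sum_add_distrib]
  have := mul_comm n m
  omega

lemma natDegree_gradHom_implRes (P Q : ℂ[X]) (n m : ℕ) :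
    (gradHom n m (implRes P Q n m)).natDegree ≤ n * m := by
  rw [gradHom_implRes, Polynomial.resultant, ← sum_weights_aux n m]
  apply natDegree_det_le_weights
  intro i j
  induction j using Fin.addCases with
  | left j =>
    simp only [Polynomial.sylvester, Matrix.of_apply, Fin.addCases_left]
    split_ifs with h
    · intro _
      have := coeff_weight_aux Q (MvPolynomial.X 1) m ((i : ℕ) - j) (by
        have := h.2; omega)
      have h1 := h.1
      have h2 := h.2
      omega
    · simp
  | right j =>
    simp only [Polynomial.sylvester, Matrix.of_apply, Fin.addCases_right]
    split_ifs with h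
    · intro _
      have := coeff_weight_aux P (MvPolynomial.X 0) n ((i : ℕ) - j) (by
        have := h.2; omega)
      have h1 := h.1
      have h2 := h.2
      omega
    · simp

lemma implRes_vanishes (P Q : ℂ[X]) (n m : ℕ) (hP : P.natDegree ≤ n) (hQ : Q.natDegree ≤ m)
    (hn : n ≠ 0) : MvPolynomial.aeval ![P, Q] (implRes P Q n m) = 0 := by
  obtain ⟨p, q, -, -, h⟩ := Polynomial.exists_mul_add_mul_eq_C_resultant (m := n) (n := m)
    (P.map MvPolynomial.C - Polynomial.C (MvPolynomial.X (R := ℂ) (0 : Fin 2)))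
    (Q.map MvPolynomial.C - Polynomial.C (MvPolynomial.X (R := ℂ) (1 : Fin 2)))
    ((Polynomial.natDegree_sub_C).trans_le ((Polynomial.natDegree_map_le).trans hP))
    ((Polynomial.natDegree_sub_C).trans_le ((Polynomial.natDegree_map_le).trans hQ))
    (Or.inl hn)
  have h2 := congrArg (Polynomial.eval₂RingHom
    (MvPolynomial.aeval ![P, Q] : MvPolynomial (Fin 2) ℂ →ₐ[ℂ] ℂ[X]).toRingHom
    Polynomial.X) h
  have e : ((MvPolynomial.aeval ![P, Q] : MvPolynomial (Fin 2) ℂ →ₐ[ℂ] ℂ[X]) :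
      MvPolynomial (Fin 2) ℂ →+* ℂ[X]).comp MvPolynomial.C = Polynomial.C :=
    (MvPolynomial.aeval ![P, Q] : MvPolynomial (Fin 2) ℂ →ₐ[ℂ] ℂ[X]).comp_algebraMap
  simp [Polynomial.eval₂_map, e] at h2
  exact h2.symm

lemma constantCoeff_implRes (P Q : ℂ[X]) (n m : ℕ) :
    MvPolynomial.constantCoeff (implRes P Q n m) = Polynomial.resultant P Q n m := by
  rw [implRes, ← Polynomial.resultant_map_map]
  congr 1 <;> simp [Polynomial.map_map, MvPolynomial.constantCoeff_comp_C]

lemma dvd_of_map_zero {S T : Type*} [CommRing S] [IsDomain S] [UniqueFactorizationMonoid S]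
    [CommRing T] (f : S[X] →+* T)
    (hf : ∀ s : S, f (Polynomial.C s) = 0 → s = 0) (φ ψ : S[X]) (hφ : Irreducible φ)
    (h1 : f φ = 0) (h2 : f ψ = 0) : φ ∣ ψ := by
  classical
  let _ := Classical.choice (inferInstance : Nonempty (NormalizedGCDMonoid S))
  let K := FractionRing S
  by_cases hdeg : φ.natDegree = 0
  · rw [Polynomial.eq_C_of_natDegree_eq_zero hdeg] at h1
    have := hf _ h1
    exfalso
    apply hφ.ne_zero
    rw [Polynomial.eq_C_of_natDegree_eq_zero hdeg, this, Polynomial.C_0]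
  have hprim : φ.IsPrimitive := hφ.isPrimitive hdeg
  have hirr := (hprim.irreducible_iff_irreducible_map_fraction_map (K := K)).1 hφ
  apply hprim.dvd_of_fraction_map_dvd_fraction_map (K := K)
  by_contra hnd
  have hcop := (hirr.coprime_iff_not_dvd).2 hnd
  obtain ⟨u, v, huv⟩ := hcop
  obtain ⟨b, hb, hu⟩ := IsLocalization.integerNormalization_spec (nonZeroDivisors S) u
  obtain ⟨b', hb', hv⟩ := IsLocalization.integerNormalization_spec (nonZeroDivisors S) v
  set u' := IsLocalization.integerNormalization (nonZeroDivisors S) u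
  set v' := IsLocalization.integerNormalization (nonZeroDivisors S) v
  have key : Polynomial.C b' * u' * φ + Polynomial.C b * v' * ψ = Polynomial.C (b * b') := by
    apply Polynomial.map_injective (algebraMap S K) (IsFractionRing.injective S K)
    simp only [Polynomial.map_add, Polynomial.map_mul, Polynomial.map_C, hu, hv,
      Algebra.smul_def, map_mul]
    simp only [Polynomial.algebraMap_apply]
    linear_combination (Polynomial.C (algebraMap S K b) * Polynomial.C (algebraMap S K b')) * huv
  have := congrArg f key
  rw [map_add, map_mul, map_mul _ _ ψ, h1, h2] at this
  simp only [mul_zero, add_zero] at this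
  have := hf _ this.symm
  exact mul_ne_zero (nonZeroDivisors.ne_zero hb) (nonZeroDivisors.ne_zero hb') this

lemma irreducible_dvd (P Q : ℂ[X]) (hQ : Q.natDegree ≠ 0) (φ ψ : MvPolynomial (Fin 2) ℂ)
    (hφ : Irreducible φ) (h1 : MvPolynomial.aeval ![P, Q] φ = 0)
    (h2 : MvPolynomial.aeval ![P, Q] ψ = 0) : φ ∣ ψ := by
  let e := MvPolynomial.finSuccEquiv ℂ 1
  let F : (MvPolynomial (Fin 1) ℂ)[X] →+* ℂ[X] :=
    ((MvPolynomial.aeval ![P, Q] : MvPolynomial (Fin 2) ℂ →ₐ[ℂ] ℂ[X]) :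
      MvPolynomial (Fin 2) ℂ →+* ℂ[X]).comp (e.symm : _ →+* MvPolynomial (Fin 2) ℂ)
  have hF : ∀ s : MvPolynomial (Fin 1) ℂ, F (Polynomial.C s) = 0 → s = 0 := by
    intro s hs
    have e1 : e.symm (Polynomial.C s) = MvPolynomial.rename Fin.succ s := by
      rw [AlgEquiv.symm_apply_eq]
      clear hs
      induction s using MvPolynomial.induction_on with
      | C a => simp [e, MvPolynomial.finSuccEquiv_apply]
      | add p q hp hq => rw [map_add, hp, hq, map_add, map_add]
      | mul_X p i hp =>
        rw [map_mul, hp, map_mul, map_mul, MvPolynomial.rename_X]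
        congr 1
        exact (MvPolynomial.finSuccEquiv_X_succ).symm
    have hs' : MvPolynomial.aeval ![P, Q] (MvPolynomial.rename Fin.succ s) = 0 := by
      rw [← e1]; exact hs
    rw [MvPolynomial.aeval_rename] at hs'
    have hind : AlgebraicIndependent ℂ (![P, Q] ∘ Fin.succ : Fin 1 → ℂ[X]) := by
      rw [algebraicIndependent_unique_type_iff]
      have : (![P, Q] ∘ Fin.succ : Fin 1 → ℂ[X]) default = Q := rfl
      rw [this]
      refine Polynomial.transcendental Q hQ (mem_nonZeroDivisors_of_ne_zero ?_)
      intro h0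
      apply hQ
      rw [Polynomial.leadingCoeff_eq_zero.1 h0, Polynomial.natDegree_zero]
    exact hind.eq_zero_of_aeval_eq_zero _ hs'
  have := dvd_of_map_zero F hF (e φ) (e ψ) ((MulEquiv.irreducible_iff e.toMulEquiv).2 hφ)
    (by simp [F, h1]) (by simp [F, h2])
  simpa using (map_dvd_iff e.toMulEquiv).1 this

lemma coeffs_zero_of_fiber (P Q : ℂ[X]) (y0 : ℂ) (T : Finset ℂ) (m : ℕ) (hT : m ≤ T.card)
    (hQ : Q.natDegree ≠ 0) (hfib : ∀ t ∈ T, Q.eval t = y0)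
    (hinj : Set.InjOn (fun t => P.eval t) (T : Set ℂ)) (N : ℕ) :
    ∀ q : Fin m → ℂ[X], (∀ i, (q i).degree < N) →
      ∑ i : Fin m, P ^ (i : ℕ) * (q i).comp Q = 0 → ∀ i, q i = 0 := by
  induction N with
  | zero =>
    intro q hq _ i
    simpa using hq i
  | succ N ih =>
    intro q hq hsum
    have hroot : ∀ i, (q i).IsRoot y0 := by
      have hz : ∑ i : Fin m, Polynomial.C ((q i).eval y0) * Polynomial.X ^ (i : ℕ) = 0 := by
        classical
        apply Polynomial.eq_zero_of_degree_lt_of_eval_finset_eq_zero (T.image fun t => P.eval t)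
        · rw [Finset.card_image_of_injOn hinj]
          refine (Polynomial.degree_sum_fin_lt _).trans_le ?_
          exact_mod_cast hT
        · intro x hx
          obtain ⟨t, ht, rfl⟩ := Finset.mem_image.1 hx
          have := congrArg (Polynomial.eval t) hsum
          simp only [Polynomial.eval_finsetSum, Polynomial.eval_mul, Polynomial.eval_pow,
            Polynomial.eval_comp, hfib t ht, Polynomial.eval_zero] at this
          simp only [Polynomial.eval_finsetSum, Polynomial.eval_mul, Polynomial.eval_pow,
            Polynomial.eval_C, Polynomial.eval_X]
          rw [← this]
          exact Finset.sum_congr rfl fun i _ => mul_comm _ _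
      intro i
      have := congrArg (fun p => Polynomial.coeff p (i : ℕ)) hz
      simp only [Polynomial.finsetSum_coeff, Polynomial.coeff_C_mul_X_pow,
        Polynomial.coeff_zero] at this
      rw [Finset.sum_eq_single i] at this
      · simpa using this
      · intro j _ hj
        rw [if_neg]
        intro h
        exact hj (Fin.ext h.symm)
      · simp
    choose r hr using fun i => Polynomial.dvd_iff_isRoot.2 (hroot i)
    have hQ0 : Q - Polynomial.C y0 ≠ 0 := by
      intro h
      apply hQ
      rw [sub_eq_zero.1 h, Polynomial.natDegree_C]
    have hr0 : ∀ i, r i = 0 := by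
      apply ih r
      · intro i
        by_cases h0 : r i = 0
        · rw [h0, Polynomial.degree_zero]; exact WithBot.bot_lt_coe _
        have h1 := hq i
        rw [hr i, Polynomial.degree_mul, Polynomial.degree_X_sub_C,
          Polynomial.degree_eq_natDegree h0] at h1
        rw [Polynomial.degree_eq_natDegree h0]
        have : 1 + (r i).natDegree < N + 1 := by exact_mod_cast h1
        have h2 : (r i).natDegree < N := by omega
        exact_mod_cast h2
      · have : (Q - Polynomial.C y0) * ∑ i : Fin m, P ^ (i : ℕ) * (r i).comp Q = 0 := by
          rw [← hsum, Finset.mul_sum]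
          refine Finset.sum_congr rfl fun i _ => ?_
          rw [hr i]
          simp
          ring
        exact (mul_eq_zero.1 this).resolve_left hQ0
    intro i
    rw [hr i, hr0 i, mul_zero]

lemma linIndep_of_fiber (P Q : ℂ[X]) (y0 : ℂ) (T : Finset ℂ) (m N : ℕ) (hT : m ≤ T.card)
    (hQ : Q.natDegree ≠ 0) (hfib : ∀ t ∈ T, Q.eval t = y0)
    (hinj : Set.InjOn (fun t => P.eval t) (T : Set ℂ)) :
    LinearIndependent ℂ (fun k : Fin m × Fin N => P ^ (k.1 : ℕ) * Q ^ (k.2 : ℕ)) := by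
  rw [Fintype.linearIndependent_iff]
  intro g hg
  have := coeffs_zero_of_fiber P Q y0 T m hT hQ hfib hinj N
    (fun i => ∑ j : Fin N, Polynomial.C (g (i, j)) * Polynomial.X ^ (j : ℕ))
    (fun i => Polynomial.degree_sum_fin_lt _) (by
      rw [← hg, Fintype.sum_prod_type]
      refine Finset.sum_congr rfl fun i _ => ?_
      simp only [Polynomial.sum_comp, Finset.mul_sum]
      refine Finset.sum_congr rfl fun j _ => ?_
      simp [Polynomial.smul_eq_C_mul]
      ring)
  rintro ⟨i, j⟩
  have h := congrArg (fun p => Polynomial.coeff p (j : ℕ)) (this i)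
  simp only [Polynomial.finsetSum_coeff, Polynomial.coeff_C_mul_X_pow,
    Polynomial.coeff_zero] at h
  rw [Finset.sum_eq_single j] at h
  · simpa using h
  · intro k _ hk
    rw [if_neg]
    intro h
    exact hk (Fin.ext h.symm)
  · simp

/-- Linear independence is an open condition. -/
lemma linIndep_generic {σ ι : Type*} [Fintype ι] (V : ι → (MvPolynomial σ ℂ)[X]) (c₀ : σ → ℂ)
    (h : LinearIndependent ℂ (fun k => (V k).map (MvPolynomial.eval c₀))) :
    ∃ G : MvPolynomial σ ℂ, G ≠ 0 ∧ ∀ c, MvPolynomial.eval c G ≠ 0 →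
      LinearIndependent ℂ (fun k => (V k).map (MvPolynomial.eval c)) := by
  classical
  obtain ⟨g, hg⟩ := (Fintype.linearCombination ℂ
    (fun k => (V k).map (MvPolynomial.eval c₀))).exists_leftInverse_of_injective
    (LinearMap.ker_eq_bot.2 (linearIndependent_iff_injective_fintypeLinearCombination.1 h))
  let M : Matrix ι ι (MvPolynomial σ ℂ) := fun k l =>
    (V k).sum fun s a => a * MvPolynomial.C (g (Polynomial.X ^ s) l)
  have hM : ∀ c k l, MvPolynomial.eval c (M k l) = g ((V k).map (MvPolynomial.eval c)) l := by
    intro c k l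
    have : (V k).map (MvPolynomial.eval c) =
        (V k).sum fun s a => (MvPolynomial.eval c a) • (Polynomial.X ^ s : ℂ[X]) := by
      conv_lhs => rw [Polynomial.as_sum_support_C_mul_X_pow (V k)]
      simp [Polynomial.sum_def, Polynomial.map_sum, Polynomial.smul_eq_C_mul]
    rw [this]
    simp [M, Polynomial.sum_def, map_sum, Finset.sum_apply]
  have hdet : ∀ c, MvPolynomial.eval c M.det =
      Matrix.det (fun k l => g ((V k).map (MvPolynomial.eval c)) l) := by
    intro c
    rw [RingHom.map_det]
    congr 1
    ext k l
    exact hM c k l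
  refine ⟨M.det, ?_, ?_⟩
  · intro h0
    have h1 := hdet c₀
    have h2 : (fun k l => g ((V k).map (MvPolynomial.eval c₀)) l) = (1 : Matrix ι ι ℂ) := by
      ext k l
      have := congrFun (LinearMap.congr_fun hg (Pi.single k 1)) l
      simp at this
      rw [this, Matrix.one_apply, Pi.single_apply]
      simp [eq_comm]
    rw [h2, h0] at h1
    simp at h1
  · intro c hc
    rw [hdet] at hc
    have := Matrix.linearIndependent_rows_of_det_ne_zero hc
    exact LinearIndependent.of_comp g this

lemma exists_eval_ne_zero_mv {σ : Type*} (p : MvPolynomial σ ℂ) (hp : p ≠ 0) :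
    ∃ x, MvPolynomial.eval x p ≠ 0 := by
  by_contra! h
  exact hp (MvPolynomial.funext fun x => by simp [h x])

lemma polyOfCoeffs_coeff (S : Finset ℕ) (c : {s // s ∈ S} → ℂ) (k : ℕ) :
    (polyOfCoeffs S c).coeff k = if h : k ∈ S then c ⟨k, h⟩ else 0 := by
  simp only [polyOfCoeffs, Polynomial.finsetSum_coeff, Polynomial.coeff_C_mul_X_pow]
  split_ifs with h
  · rw [Finset.sum_eq_single ⟨k, h⟩]
    · simp
    · rintro ⟨j, hj⟩ _ hne
      rw [if_neg]
      intro h'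
      exact hne (Subtype.ext h'.symm)
    · simp
  · apply Finset.sum_eq_zero
    rintro ⟨j, hj⟩ _
    rw [if_neg]
    rintro rfl
    exact h hj

lemma polyOfCoeffs_natDegree_le (S : Finset ℕ) (c : {s // s ∈ S} → ℂ) (n : ℕ)
    (hn : ∀ s ∈ S, s ≤ n) : (polyOfCoeffs S c).natDegree ≤ n := by
  rw [Polynomial.natDegree_le_iff_coeff_eq_zero]
  intro N hN
  rw [polyOfCoeffs_coeff, dif_neg]
  intro h
  have := hn N h
  omega

lemma polyOfCoeffs_natDegree (S : Finset ℕ) (c : {s // s ∈ S} → ℂ) (n : ℕ)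
    (hn : ∀ s ∈ S, s ≤ n) (hmem : n ∈ S) (hc : c ⟨n, hmem⟩ ≠ 0) :
    (polyOfCoeffs S c).natDegree = n := by
  apply le_antisymm (polyOfCoeffs_natDegree_le S c n hn)
  apply Polynomial.le_natDegree_of_ne_zero
  rw [polyOfCoeffs_coeff, dif_pos hmem]
  exact hc

/-- Existence of a special fiber separated by a parameterization with given supports. -/
lemma exists_special (A B : Finset ℕ) (n m : ℕ) (hnA : n ∈ A) (hn : n ≠ 0)
    (hmB : m ∈ B) (hmax : ∀ s ∈ B, s ≤ m) (hm : m ≠ 0)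
    (hg : ∀ d, (∀ s ∈ A, d ∣ s) → (∀ s ∈ B, d ∣ s) → d = 1) :
    ∃ (a : {s // s ∈ A} → ℂ) (b : {s // s ∈ B} → ℂ) (y0 : ℂ) (T : Finset ℂ),
      m ≤ T.card ∧ (polyOfCoeffs B b).natDegree ≠ 0 ∧
      (∀ t ∈ T, (polyOfCoeffs B b).eval t = y0) ∧
      Set.InjOn (fun t => (polyOfCoeffs A a).eval t) (T : Set ℂ) := by
  classical
  set Q := polyOfCoeffs B (fun _ => 1) with hQdef
  have hQdeg : Q.natDegree = m := polyOfCoeffs_natDegree B _ m hmax hmB (by simp)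
  have hQcoeff : ∀ s ∈ B, Q.coeff s = 1 := by
    intro s hs
    rw [hQdef, polyOfCoeffs_coeff, dif_pos hs]
  set W := (Polynomial.nthRootsFinset n (1 : ℂ)).filter
    (fun ω => ω ≠ 1 ∧ ∀ s ∈ A, ω ^ s = 1) with hW
  set H : ℂ[X] := Polynomial.X * Polynomial.derivative Q *
    ∏ ω ∈ W, (Q - Q.comp (Polynomial.C ω * Polynomial.X)) with hH
  have hH0 : H ≠ 0 := by
    refine mul_ne_zero (mul_ne_zero Polynomial.X_ne_zero ?_) ?_
    · intro h
      have := Polynomial.derivative_eq_zero.1 h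
      omega
    · rw [Finset.prod_ne_zero_iff]
      intro ω hω h0
      rw [hW, Finset.mem_filter] at hω
      obtain ⟨_, hω1, hωA⟩ := hω
      have hωB : ∀ s ∈ B, ω ^ s = 1 := by
        intro s hs
        have := congrArg (fun p => Polynomial.coeff p s) h0
        simp only [Polynomial.coeff_sub, Polynomial.comp_C_mul_X_coeff, Polynomial.coeff_zero,
          hQcoeff s hs] at this
        rw [one_mul, sub_eq_zero] at this
        exact this.symm
      apply hω1
      have := hg (orderOf ω) (fun s hs => orderOf_dvd_of_pow_eq_one (hωA s hs))
        (fun s hs => orderOf_dvd_of_pow_eq_one (hωB s hs))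
      exact orderOf_eq_one_iff.1 this
  obtain ⟨y0, hy0⟩ := Infinite.exists_notMem_finset (H.roots.toFinset.image fun t => Q.eval t)
  have hgood : ∀ t, Q.eval t = y0 → H.eval t ≠ 0 := by
    intro t ht h0
    apply hy0
    rw [Finset.mem_image]
    exact ⟨t, by simp [hH0, h0], ht⟩
  set F := Q - Polynomial.C y0 with hF
  have hFdeg : F.natDegree = m := by rw [hF, Polynomial.natDegree_sub_C, hQdeg]
  have hF0 : F ≠ 0 := by
    intro h
    rw [h, Polynomial.natDegree_zero] at hFdeg
    exact hm hFdeg.symm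
  set T := F.roots.toFinset with hT
  have hTmem : ∀ t, t ∈ T ↔ Q.eval t = y0 := by
    intro t
    rw [hT, Multiset.mem_toFinset, Polynomial.mem_roots hF0]
    simp [hF, sub_eq_zero]
  have hTcard : T.card = m := by
    rw [hT, Multiset.toFinset_card_of_nodup, ← hFdeg]
    · exact (IsAlgClosed.splits F).natDegree_eq_card_roots.symm
    · rw [Multiset.nodup_iff_count_le_one]
      intro t
      rw [Polynomial.count_roots]
      by_contra! hlt
      rw [Polynomial.one_lt_rootMultiplicity_iff_isRoot hF0] at hlt
      obtain ⟨h1, h2⟩ := hlt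
      have h1' : Q.eval t = y0 := by
        simpa [hF, sub_eq_zero] using h1
      apply hgood t h1'
      have h2' : (Polynomial.derivative Q).eval t = 0 := by simpa [hF] using h2
      simp [hH, h2']
  have hsep : ∀ t ∈ T, ∀ t' ∈ T, t ≠ t' → ∃ s ∈ A, t ^ s ≠ t' ^ s := by
    intro t ht t' ht' hne
    by_contra! hall
    have h1 := hgood t ((hTmem t).1 ht)
    have ht0 : t ≠ 0 := by
      rintro rfl
      apply h1
      simp [hH]
    set ω := t' / t with hω
    have htω : t' = ω * t := by rw [hω]; field_simp
    have hωA : ∀ s ∈ A, ω ^ s = 1 := by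
      intro s hs
      rw [hω, div_pow, ← hall s hs]
      exact div_self (pow_ne_zero _ ht0)
    have hωW : ω ∈ W := by
      rw [hW, Finset.mem_filter]
      refine ⟨?_, ?_, hωA⟩
      · rw [Polynomial.mem_nthRootsFinset (Nat.pos_of_ne_zero hn)]
        exact hωA n hnA
      · intro h
        apply hne
        rw [htω, h, one_mul]
    apply h1
    rw [hH, Polynomial.eval_mul, Polynomial.eval_prod]
    rw [Finset.prod_eq_zero hωW, mul_zero]
    simp only [Polynomial.eval_sub, Polynomial.eval_comp, Polynomial.eval_mul, Polynomial.eval_C,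
      Polynomial.eval_X]
    rw [← htω, (hTmem t).1 ht, (hTmem t').1 ht', sub_self]
  have hprod : ∏ p ∈ T.offDiag, (∑ s ∈ A.attach, MvPolynomial.X s *
      MvPolynomial.C (p.1 ^ (s : ℕ) - p.2 ^ (s : ℕ)) : MvPolynomial {s // s ∈ A} ℂ) ≠ 0 := by
    rw [Finset.prod_ne_zero_iff]
    rintro ⟨t, t'⟩ hp h0
    rw [Finset.mem_offDiag] at hp
    obtain ⟨s, hs, hne⟩ := hsep t hp.1 t' hp.2.1 hp.2.2
    have := congrArg (MvPolynomial.eval (Pi.single (⟨s, hs⟩ : {s // s ∈ A}) (1 : ℂ))) h0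
    simp only [map_sum, map_mul, MvPolynomial.eval_X, MvPolynomial.eval_C, map_zero] at this
    rw [Finset.sum_eq_single ⟨s, hs⟩] at this
    · simp only [Pi.single_eq_same, one_mul] at this
      exact hne (sub_eq_zero.1 this)
    · intro j _ hj
      rw [Pi.single_eq_of_ne hj, zero_mul]
    · simp
  obtain ⟨a, ha⟩ := exists_eval_ne_zero_mv _ hprod
  refine ⟨a, fun _ => 1, y0, T, hTcard.ge, ?_, fun t ht => (hTmem t).1 ht, ?_⟩
  · rw [← hQdef, hQdeg]; exact hm
  · intro t ht t' ht' heq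
    by_contra hne
    rw [map_prod, Finset.prod_ne_zero_iff] at ha
    apply ha (t, t') (Finset.mem_offDiag.2 ⟨ht, ht', hne⟩)
    simp only [polyOfCoeffs, Polynomial.eval_finsetSum, Polynomial.eval_mul, Polynomial.eval_pow,
      Polynomial.eval_C, Polynomial.eval_X] at heq
    simp only [map_sum, map_mul, MvPolynomial.eval_X, MvPolynomial.eval_C, mul_sub,
      Finset.sum_sub_distrib]
    exact sub_eq_zero.2 heq

/-- The polynomial with generic coefficients. -/
noncomputable def genPoly (A : Fin 2 → Finset ℕ) (i : Fin 2) :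
    (MvPolynomial (Σ i : Fin 2, {s // s ∈ A i}) ℂ)[X] :=
  ∑ s ∈ (A i).attach, Polynomial.C (MvPolynomial.X ⟨i, s⟩) * Polynomial.X ^ (s : ℕ)

lemma genPoly_map (A : Fin 2 → Finset ℕ) (i : Fin 2) (c : (Σ i : Fin 2, {s // s ∈ A i}) → ℂ) :
    (genPoly A i).map (MvPolynomial.eval c) = polyOfCoeffs (A i) (fun s => c ⟨i, s⟩) := by
  simp [genPoly, polyOfCoeffs, Polynomial.map_sum]

/-- Assemble a coefficient vector from its two parts. -/
def joinCoeffs (A : Fin 2 → Finset ℕ) (f : ∀ i : Fin 2, {s // s ∈ A i} → ℂ) :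
    (Σ i : Fin 2, {s // s ∈ A i}) → ℂ := fun p => f p.1 p.2

lemma generic_indep (A : Fin 2 → Finset ℕ) (i j : Fin 2) (hij : i ≠ j) (n m N : ℕ)
    (hnA : n ∈ A i) (hn : n ≠ 0)
    (hmB : m ∈ A j) (hmax : ∀ s ∈ A j, s ≤ m) (hm : m ≠ 0)
    (hg : ∀ d, (∀ s ∈ A i, d ∣ s) → (∀ s ∈ A j, d ∣ s) → d = 1) :
    ∃ G : MvPolynomial (Σ i : Fin 2, {s // s ∈ A i}) ℂ, G ≠ 0 ∧
      ∀ c, MvPolynomial.eval c G ≠ 0 →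
        LinearIndependent ℂ (fun k : Fin m × Fin N =>
          polyOfCoeffs (A i) (fun s => c ⟨i, s⟩) ^ (k.1 : ℕ) *
          polyOfCoeffs (A j) (fun s => c ⟨j, s⟩) ^ (k.2 : ℕ)) := by
  obtain ⟨a, b, y0, T, h1, h2, h3, h4⟩ := exists_special (A i) (A j) n m hnA hn hmB hmax hm hg
  have h5 := linIndep_of_fiber _ _ y0 T m N h1 h2 h3 h4
  have hc : ∃ c : (Σ i : Fin 2, {s // s ∈ A i}) → ℂ,
      (fun s => c ⟨i, s⟩) = a ∧ (fun s => c ⟨j, s⟩) = b := by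
    classical
    refine ⟨joinCoeffs A (Function.update (Function.update (fun _ _ => 0) i a) j b), ?_, ?_⟩
    · ext s
      simp [joinCoeffs, Function.update_of_ne hij]
    · ext s
      simp [joinCoeffs]
  obtain ⟨c, rfl, rfl⟩ := hc
  obtain ⟨G, hG0, hG⟩ := linIndep_generic
    (fun k : Fin m × Fin N => genPoly A i ^ (k.1 : ℕ) * genPoly A j ^ (k.2 : ℕ)) c (by
      simpa only [Polynomial.map_mul, Polynomial.map_pow, genPoly_map] using h5)
  refine ⟨G, hG0, fun c hc => ?_⟩
  simpa only [Polynomial.map_mul, Polynomial.map_pow, genPoly_map] using hG c hc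

lemma generic_resultant (A : Fin 2 → Finset ℕ) (n m : ℕ)
    (hnA : n ∈ A 0) (hmaxn : ∀ s ∈ A 0, s ≤ n)
    (hmB : m ∈ A 1) (hmax : ∀ s ∈ A 1, s ≤ m) (hconst : 0 ∈ A 0 ∨ 0 ∈ A 1) :
    Polynomial.resultant (genPoly A 0) (genPoly A 1) n m ≠ 0 := by
  classical
  have hX : ∀ (S : Finset ℕ) (k : ℕ) (hk : k ∈ S),
      polyOfCoeffs S (Pi.single ⟨k, hk⟩ 1) = Polynomial.X ^ k := by
    intro S k hk
    ext l
    rw [polyOfCoeffs_coeff, Polynomial.coeff_X_pow]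
    by_cases h : l = k
    · subst h; simp [hk]
    · rw [if_neg h]
      split_ifs with h'
      · rw [Pi.single_eq_of_ne]
        intro h2
        exact h (Subtype.ext_iff.1 h2)
      · rfl
  intro h0
  have key : ∀ c : (Σ i : Fin 2, {s // s ∈ A i}) → ℂ, Polynomial.resultant (polyOfCoeffs (A 0) (fun s => c ⟨0, s⟩))
      (polyOfCoeffs (A 1) (fun s => c ⟨1, s⟩)) n m = 0 := by
    intro c
    rw [← genPoly_map, ← genPoly_map, Polynomial.resultant_map_map, h0, map_zero]
  rcases hconst with h | h
  · have := key (joinCoeffs A (Fin.cons (fun _ => 1) (Fin.cons (Pi.single ⟨m, hmB⟩ 1)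
      (fun i => i.elim0))))
    have e1 : polyOfCoeffs (A 1) (fun s => joinCoeffs A (Fin.cons (fun _ => 1)
        (Fin.cons (Pi.single ⟨m, hmB⟩ 1) (fun i => i.elim0))) ⟨1, s⟩) = Polynomial.X ^ m :=
      hX (A 1) m hmB
    rw [e1, Polynomial.resultant_X_pow_right _ _ _ (polyOfCoeffs_natDegree_le _ _ _ hmaxn),
      polyOfCoeffs_coeff, dif_pos h] at this
    simp [joinCoeffs] at this
  · have := key (joinCoeffs A (Fin.cons (Pi.single ⟨n, hnA⟩ 1) (Fin.cons (fun _ => 1)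
      (fun i => i.elim0))))
    have e1 : polyOfCoeffs (A 0) (fun s => joinCoeffs A (Fin.cons (Pi.single ⟨n, hnA⟩ 1)
        (Fin.cons (fun _ => 1) (fun i => i.elim0))) ⟨0, s⟩) = Polynomial.X ^ n :=
      hX (A 0) n hnA
    have e2 : polyOfCoeffs (A 1) (fun s => joinCoeffs A (Fin.cons (Pi.single ⟨n, hnA⟩ 1)
        (Fin.cons (fun _ => 1) (fun i => i.elim0))) ⟨1, s⟩) =
        polyOfCoeffs (A 1) (fun _ => 1) := rfl
    rw [e1, e2, Polynomial.resultant_X_pow_left _ _ _ (polyOfCoeffs_natDegree_le _ _ _ hmax),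
      polyOfCoeffs_coeff, dif_pos h] at this
    simp at this

lemma exists_large_exponent (P Q : ℂ[X]) (m N : ℕ) (u v : Fin 2) (huv : u ≠ v)
    (hind : LinearIndependent ℂ (fun k : Fin m × Fin N => P ^ (k.1 : ℕ) * Q ^ (k.2 : ℕ)))
    (φ : MvPolynomial (Fin 2) ℂ) (hφ : φ ≠ 0) (f : Fin 2 → ℂ[X]) (hu : f u = P) (hv : f v = Q)
    (hvan : MvPolynomial.aeval f φ = 0) (hN : ∀ d ∈ φ.support, d v < N) :
    ∃ d ∈ φ.support, m ≤ d u := by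
  classical
  by_contra! hlt
  apply hφ
  have hdet : ∀ d e : Fin 2 →₀ ℕ, d u = e u → d v = e v → d = e := by
    intro d e h1 h2
    ext w
    have : w = u ∨ w = v := by omega
    rcases this with rfl | rfl <;> assumption
  have hmon : ∀ d : Fin 2 →₀ ℕ, d.prod (fun i k => f i ^ k) = P ^ d u * Q ^ d v := by
    intro d
    rw [Finsupp.prod_fintype _ _ (by simp), Fin.prod_univ_two, ← hu, ← hv]
    have : (u = 0 ∧ v = 1) ∨ (u = 1 ∧ v = 0) := by omega
    rcases this with ⟨rfl, rfl⟩ | ⟨rfl, rfl⟩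
    · rfl
    · rw [mul_comm]
  let idx : {d // d ∈ φ.support} → Fin m × Fin N := fun d =>
    (⟨d.1 u, hlt d.1 d.2⟩, ⟨d.1 v, hN d.1 d.2⟩)
  have hidx : Function.Injective idx := by
    intro d e h
    simp only [idx, Prod.mk.injEq, Fin.mk.injEq] at h
    exact Subtype.ext (hdet _ _ h.1 h.2)
  have h1 := hind.comp idx hidx
  rw [Fintype.linearIndependent_iff] at h1
  have h2 := h1 (fun d => φ.coeff d.1) (by
    rw [MvPolynomial.aeval_def, MvPolynomial.eval₂_eq] at hvan
    rw [← hvan, ← Finset.sum_coe_sort φ.support]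
    refine Finset.sum_congr rfl fun d _ => ?_
    have := hmon d.1
    rw [Finsupp.prod] at this
    rw [this, Polynomial.smul_eq_C_mul]
    rfl)
  by_contra h3
  obtain ⟨d, hd⟩ := MvPolynomial.ne_zero_iff.1 h3
  exact hd (h2 ⟨d, MvPolynomial.mem_support_iff.2 hd⟩)

lemma triangle_mem (n m : ℕ) (hn : 1 ≤ n) (hm : 1 ≤ m) (i j : ℕ) (h : n * i + m * j ≤ n * m) :
    ((i : ℝ), (j : ℝ)) ∈
      convexHull ℝ {((0 : ℝ), (0 : ℝ)), ((m : ℝ), (0 : ℝ)), ((0 : ℝ), (n : ℝ))} := by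
  have hn' : (0 : ℝ) < n := by exact_mod_cast hn
  have hm' : (0 : ℝ) < m := by exact_mod_cast hm
  have h' : (n : ℝ) * i + m * j ≤ n * m := by exact_mod_cast h
  have hs : (i : ℝ) / m + j / n ≤ 1 := by
    rw [div_add_div _ _ hm'.ne' hn'.ne', div_le_one (by positivity)]
    nlinarith
  rw [convexHull_insert (by simp), convexHull_pair]
  rw [mem_convexJoin]
  simp only [Set.mem_singleton_iff, exists_eq_left]
  by_cases h0 : (i : ℝ) / m + j / n = 0
  · have hi : (0 : ℝ) ≤ i / m := by positivity
    have hj : (0 : ℝ) ≤ j / n := by positivity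
    have hi0 : (i : ℝ) / m = 0 := by linarith
    have hj0 : (j : ℝ) / n = 0 := by linarith
    rw [div_eq_zero_iff] at hi0 hj0
    have hi1 := hi0.resolve_right hm'.ne'
    have hj1 := hj0.resolve_right hn'.ne'
    rw [hi1, hj1]
    exact ⟨_, left_mem_segment ℝ _ _, left_mem_segment ℝ _ _⟩
  · set S := (i : ℝ) / m + j / n with hS
    have hSpos : 0 < S := lt_of_le_of_ne (by positivity) (Ne.symm h0)
    refine ⟨((i : ℝ) / S, (j : ℝ) / S), ?_, ?_⟩
    · refine ⟨(i : ℝ) / m / S, (j : ℝ) / n / S, by positivity, by positivity, ?_, ?_⟩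
      · rw [← add_div, ← hS, div_self h0]
      · simp only [Prod.smul_mk, smul_eq_mul, mul_zero, Prod.mk_add_mk, add_zero, zero_add]
        congr 1 <;> field_simp
    · refine ⟨1 - S, S, by linarith, hSpos.le, by ring, ?_⟩
      simp only [Prod.smul_mk, smul_eq_mul, mul_zero, Prod.mk_add_mk, zero_add]
      congr 1 <;> field_simp

lemma core_deduction (P Q : ℂ[X]) (n' m' : ℕ) (hn'1 : 1 ≤ n') (hm'1 : 1 ≤ m')
    (I1 : LinearIndependent ℂ
      (fun k : Fin m' × Fin (n' + 1) => P ^ (k.1 : ℕ) * Q ^ (k.2 : ℕ)))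
    (I2 : LinearIndependent ℂ
      (fun k : Fin n' × Fin (m' + 1) => Q ^ (k.1 : ℕ) * P ^ (k.2 : ℕ)))
    (hc3 : Polynomial.resultant P Q n' m' ≠ 0)
    (hPd : P.natDegree ≤ n') (hQd : Q.natDegree = m')
    (φ : MvPolynomial (Fin 2) ℂ) (hφ : Irreducible φ)
    (hvan : MvPolynomial.aeval ![P, Q] φ = 0) :
    newtonPolygon φ =
      convexHull ℝ {((0 : ℝ), (0 : ℝ)), ((m' : ℝ), (0 : ℝ)), ((0 : ℝ), (n' : ℝ))} := by
  have hdvd : φ ∣ implRes P Q n' m' := irreducible_dvd P Q (by omega) _ _ hφ hvan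
    (implRes_vanishes P Q n' m' hPd hQd.le (by omega))
  have hR0 : MvPolynomial.constantCoeff (implRes P Q n' m') ≠ 0 := by
    rwa [constantCoeff_implRes]
  have hRne : implRes P Q n' m' ≠ 0 := by
    intro h
    rw [h, map_zero] at hR0
    exact hR0 rfl
  have hφ0 : (0 : Fin 2 →₀ ℕ) ∈ φ.support := by
    rw [MvPolynomial.mem_support_iff]
    intro h
    apply hR0
    obtain ⟨q, hq⟩ := hdvd
    rw [hq, map_mul, MvPolynomial.constantCoeff_eq, h, zero_mul]
  have hw : ∀ d ∈ φ.support, n' * d 0 + m' * d 1 ≤ n' * m' := by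
    intro d hd
    refine (weight_le_of_mem_support n' m' φ d hd).trans ?_
    refine le_trans ?_ (natDegree_gradHom_implRes P Q n' m')
    obtain ⟨q, hq⟩ := hdvd
    have hne := gradHom_ne_zero n' m' _ hRne
    have hmul : gradHom n' m' (implRes P Q n' m') = gradHom n' m' φ * gradHom n' m' q := by
      rw [hq]
      exact (gradHom n' m').map_mul φ q
    rw [hmul] at hne ⊢
    rw [Polynomial.natDegree_mul (left_ne_zero_of_mul hne) (right_ne_zero_of_mul hne)]
    exact Nat.le_add_right _ _
  have hd1 : ∀ d ∈ φ.support, d 1 < n' + 1 := by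
    intro d hd
    have := hw d hd
    have h2 : m' * d 1 ≤ m' * n' := by
      rw [mul_comm m' n']
      exact (Nat.le_add_left _ _).trans this
    exact Nat.lt_succ_of_le (Nat.le_of_mul_le_mul_left h2 hm'1)
  have hd0 : ∀ d ∈ φ.support, d 0 < m' + 1 := by
    intro d hd
    have := hw d hd
    have h2 : n' * d 0 ≤ n' * m' := (Nat.le_add_right _ _).trans this
    exact Nat.lt_succ_of_le (Nat.le_of_mul_le_mul_left h2 hn'1)
  obtain ⟨d, hd, hdm⟩ := exists_large_exponent P Q m' (n' + 1) 0 1 (by decide) I1 φ hφ.ne_zero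
    ![P, Q] rfl rfl hvan hd1
  obtain ⟨e, he, hen⟩ := exists_large_exponent Q P n' (m' + 1) 1 0 (by decide) I2 φ hφ.ne_zero
    ![P, Q] rfl rfl hvan hd0
  have hdm' : d 0 = m' := le_antisymm (Nat.le_of_lt_succ (hd0 d hd)) hdm
  have hd1' : d 1 = 0 := by
    have := hw d hd
    rw [hdm'] at this
    have h3 : m' * d 1 = 0 := by omega
    exact (Nat.mul_eq_zero.1 h3).resolve_left (by omega)
  have hen' : e 1 = n' := le_antisymm (Nat.le_of_lt_succ (hd1 e he)) hen
  have he0' : e 0 = 0 := by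
    have := hw e he
    rw [hen', mul_comm m' n'] at this
    have h3 : n' * e 0 = 0 := by omega
    exact (Nat.mul_eq_zero.1 h3).resolve_left (by omega)
  apply Set.Subset.antisymm
  · refine convexHull_min ?_ (convex_convexHull ℝ _)
    rintro _ ⟨p, hp, rfl⟩
    exact triangle_mem n' m' hn'1 hm'1 _ _ (hw p hp)
  · refine convexHull_mono ?_
    rintro x (rfl | rfl | rfl)
    · exact ⟨0, hφ0, by simp⟩
    · exact ⟨d, hd, by simp [hdm', hd1']⟩
    · exact ⟨e, he, by simp [he0', hen', Nat.cast_zero]⟩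

/-- Polynomial parameterizations, case with a constant term: the implicit Newton polygon
is the triangle with vertices `(0,0)`, `(m',0)`, `(0,n')`. -/
theorem implicit_polygon_poly_triangle (A : Fin 2 → Finset ℕ) (hne : ∀ i, (A i).Nonempty)
    (n' m' : ℕ) (hn' : n' = (A 0).max' (hne 0)) (hm' : m' = (A 1).max' (hne 1))
    (hn'1 : 1 ≤ n') (hm'1 : 1 ≤ m')
    (hgcd : ((A 0 ∪ A 1).filter (fun s => s ≠ 0)).gcd id = 1)
    (hconst : 0 ∈ A 0 ∨ 0 ∈ A 1) :
    ∃ G : MvPolynomial (Σ i : Fin 2, {s // s ∈ A i}) ℂ, G ≠ 0 ∧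
      ∀ c : (Σ i : Fin 2, {s // s ∈ A i}) → ℂ, MvPolynomial.eval c G ≠ 0 →
        ∀ φ : MvPolynomial (Fin 2) ℂ, Irreducible φ → vanishesPoly A c φ →
          newtonPolygon φ =
            convexHull ℝ {((0 : ℝ), (0 : ℝ)), ((m' : ℝ), (0 : ℝ)), ((0 : ℝ), (n' : ℝ))} := by
  classical
  have hnA : n' ∈ A 0 := hn' ▸ Finset.max'_mem _ _
  have hmB : m' ∈ A 1 := hm' ▸ Finset.max'_mem _ _
  have hmaxn : ∀ s ∈ A 0, s ≤ n' := fun s hs => hn' ▸ Finset.le_max' _ _ hs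
  have hmaxm : ∀ s ∈ A 1, s ≤ m' := fun s hs => hm' ▸ Finset.le_max' _ _ hs
  have hg : ∀ d, (∀ s ∈ A 0, d ∣ s) → (∀ s ∈ A 1, d ∣ s) → d = 1 := by
    intro d h0 h1
    apply Nat.dvd_one.1
    rw [← hgcd]
    apply Finset.dvd_gcd
    intro s hs
    rw [Finset.mem_filter, Finset.mem_union] at hs
    exact hs.1.elim (h0 s) (h1 s)
  obtain ⟨G1, hG1, H1⟩ := generic_indep A 0 1 (by decide) n' m' (n' + 1) hnA (by omega) hmB hmaxm
    (by omega) hg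
  obtain ⟨G2, hG2, H2⟩ := generic_indep A 1 0 (by decide) m' n' (m' + 1) hmB (by omega) hnA hmaxn
    (by omega) (fun d h1 h0 => hg d h0 h1)
  have hG3 := generic_resultant A n' m' hnA hmaxn hmB hmaxm hconst
  refine ⟨G1 * G2 * Polynomial.resultant (genPoly A 0) (genPoly A 1) n' m' *
    MvPolynomial.X ⟨1, m', hmB⟩, mul_ne_zero (mul_ne_zero (mul_ne_zero hG1 hG2) hG3)
      (MvPolynomial.X_ne_zero _), ?_⟩
  intro c hc φ hφ hvan
  simp only [map_mul, mul_ne_zero_iff, MvPolynomial.eval_X] at hc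
  obtain ⟨⟨⟨hc1, hc2⟩, hc3⟩, hc4⟩ := hc
  have I1 := H1 c hc1
  have I2 := H2 c hc2
  rw [← Polynomial.resultant_map_map, genPoly_map, genPoly_map] at hc3
  rw [vanishesPoly] at hvan
  exact core_deduction _ _ n' m' hn'1 hm'1 I1 I2 hc3 (polyOfCoeffs_natDegree_le _ _ _ hmaxn)
    (polyOfCoeffs_natDegree _ _ _ hmaxm hmB hc4) φ hφ hvan
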